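/- arXiv:1206.0017 — 4 statements merged into one kernel-verified Lean document; each statement's English description precedes it below -/
import Mathlib

section
/- Let ρ be a function parameter of class ℬ^{+−}. Then ρ̄(t) = o(max(1,t)) as t → 0⁺ and as t → ∞; that is, ρ̄(t) → 0 as t → 0⁺ and ρ̄(t)/t → 0 as t → ∞. In particular ℬ^{+−} is contained in Peetre's class 𝒫^{+−}. -/
open Filter Set MeasureTheory ENNReal NNReal

noncomputable section

/-! ### Function parameters -/

/-- `rbar ρ s = sup_{t>0} ρ(s t)/ρ(t)`. -/
def rbar (ρ : ℝ → ℝ) (s : ℝ) : ℝ := sSup {r : ℝ | ∃ t > 0, r = ρ (s * t) / ρ t}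

/-- The class `ℬ` of function parameters. -/
structure IsClassB (ρ : ℝ → ℝ) : Prop where
  pos : ∀ t > 0, 0 < ρ t
  cont : ContinuousOn ρ (Set.Ioi 0)
  one : ρ 1 = 1
  bdd : ∀ s > 0, BddAbove {r : ℝ | ∃ t > 0, r = ρ (s * t) / ρ t}

/-- The class `ℬ^{+-}` of function parameters. -/
structure IsClassBpm (ρ : ℝ → ℝ) extends IsClassB ρ : Prop where
  integ : MeasureTheory.IntegrableOn (fun t => min 1 t⁻¹ * rbar ρ t * t⁻¹) (Set.Ioi 0)

/-- Pseudo-concavity of a function parameter. -/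
def IsPseudoConcave (ρ : ℝ → ℝ) : Prop :=
  ∃ C > 0, ∀ s > 0, ∀ t > 0, ρ t ≤ C * max 1 (t / s) * ρ s

/-! ### `ℓ^q` norms of two-sided sequences with values in `ℝ≥0∞` -/

/-- The `ℓ^q(ℤ)` norm of a sequence of extended reals. -/
def eLq (q : ℝ≥0∞) (a : ℤ → ℝ≥0∞) : ℝ≥0∞ :=
  if q = ∞ then ⨆ n, a n else (∑' n, a n ^ q.toReal) ^ (1 / q.toReal)

/-! ### Extended-real-valued norms -/

/-- `N : V → ℝ≥0∞` is a complete (Banach) extended norm; its finiteness set is the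
underlying Banach space. -/
structure IsENorm {V : Type*} [AddCommGroup V] [Module ℝ V] (N : V → ℝ≥0∞) : Prop where
  map_zero : N 0 = 0
  eq_zero : ∀ x, N x = 0 → x = 0
  add_le : ∀ x y, N (x + y) ≤ N x + N y
  smul : ∀ (c : ℝ) (x : V), N (c • x) = ENNReal.ofReal |c| * N x
  complete : ∀ u : ℕ → V, (∀ n, N (u n) ≠ ∞) →
    (∀ ε : ℝ, 0 < ε → ∃ n₀ : ℕ, ∀ m ≥ n₀, ∀ n ≥ n₀, N (u m - u n) < ENNReal.ofReal ε) →
    ∃ x, N x ≠ ∞ ∧ Filter.Tendsto (fun n => N (u n - x)) Filter.atTop (nhds 0)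

/-! ### Banach couples realized inside an ambient space -/

section Couple

variable {E₀ E₁ V : Type*} [NormedAddCommGroup E₀] [NormedSpace ℝ E₀]
  [NormedAddCommGroup E₁] [NormedSpace ℝ E₁] [AddCommGroup V] [Module ℝ V]

/-- The extended norm on the ambient space induced by the embedding of one Banach space:
`∞` outside the range of the embedding. -/
def enormOf {E : Type*} [NormedAddCommGroup E] [NormedSpace ℝ E] (i : E →ₗ[ℝ] V) (x : V) : ℝ≥0∞ :=
  ⨅ (a : E) (_ : i a = x), (‖a‖₊ : ℝ≥0∞)

/-- The `K`-functional of the couple `(E₀, E₁)`. -/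
def eKfun (i₀ : E₀ →ₗ[ℝ] V) (i₁ : E₁ →ₗ[ℝ] V) (t : ℝ) (x : V) : ℝ≥0∞ :=
  ⨅ (a : E₀) (b : E₁) (_ : x = i₀ a + i₁ b), ENNReal.ofReal (‖a‖ + t * ‖b‖)

/-- The extended norm of `E₀ + E₁`. -/
def esumNorm (i₀ : E₀ →ₗ[ℝ] V) (i₁ : E₁ →ₗ[ℝ] V) (x : V) : ℝ≥0∞ := eKfun i₀ i₁ 1 x

/-- The extended norm of `E₀ ∩ E₁`. -/
def einterNorm (i₀ : E₀ →ₗ[ℝ] V) (i₁ : E₁ →ₗ[ℝ] V) (x : V) : ℝ≥0∞ :=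
  max (enormOf i₀ x) (enormOf i₁ x)

/-- The extended norm of the interpolation space `(E₀,E₁)_{ρ,q;K}`. -/
def eKNorm (i₀ : E₀ →ₗ[ℝ] V) (i₁ : E₁ →ₗ[ℝ] V) (ρ : ℝ → ℝ) (q : ℝ≥0∞) (x : V) : ℝ≥0∞ :=
  eLq q (fun n => eKfun i₀ i₁ ((2 : ℝ) ^ n) x / ENNReal.ofReal (ρ ((2 : ℝ) ^ n)))

/-- `(a, b)` is a `J`-representation of `x`: `u_n = a n = b n ∈ E₀ ∩ E₁` and
`x = ∑_{n ∈ ℤ} u_n` with convergence in `E₀ + E₁`. -/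
def IsJRep (i₀ : E₀ →ₗ[ℝ] V) (i₁ : E₁ →ₗ[ℝ] V) (x : V) (a : ℤ → E₀) (b : ℤ → E₁) : Prop :=
  (∀ n, i₀ (a n) = i₁ (b n)) ∧
  ∀ ε : ℝ, 0 < ε → ∃ F : Finset ℤ, ∀ G : Finset ℤ, F ⊆ G →
    esumNorm i₀ i₁ (x - ∑ n ∈ G, i₀ (a n)) < ENNReal.ofReal ε

/-- The extended norm of the interpolation space `(E₀,E₁)_{ρ,q;J}`. -/
def eJNorm (i₀ : E₀ →ₗ[ℝ] V) (i₁ : E₁ →ₗ[ℝ] V) (ρ : ℝ → ℝ) (q : ℝ≥0∞) (x : V) : ℝ≥0∞ :=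
  ⨅ (a : ℤ → E₀) (b : ℤ → E₁) (_ : IsJRep i₀ i₁ x a b),
    eLq q (fun n => ENNReal.ofReal (max ‖a n‖ ((2 : ℝ) ^ n * ‖b n‖) / ρ ((2 : ℝ) ^ n)))

/-- `(E₀, E₁)` is a Banach couple: both spaces are complete and continuously embedded
in the Hausdorff topological vector space `V`. -/
structure IsBanachCouple [TopologicalSpace V] (i₀ : E₀ →ₗ[ℝ] V) (i₁ : E₁ →ₗ[ℝ] V) : Prop where
  t2 : T2Space V
  contAdd : ContinuousAdd V
  contSMul : ContinuousSMul ℝ V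
  complete₀ : CompleteSpace E₀
  complete₁ : CompleteSpace E₁
  inj₀ : Function.Injective i₀
  inj₁ : Function.Injective i₁
  cont₀ : Continuous i₀
  cont₁ : Continuous i₁

/-- `N` is (the extended norm of) an intermediate space for the couple `(E₀, E₁)`. -/
def IsIntermediate (i₀ : E₀ →ₗ[ℝ] V) (i₁ : E₁ →ₗ[ℝ] V) (N : V → ℝ≥0∞) : Prop :=
  IsENorm N ∧
  (∃ C > 0, ∀ x : V, N x ≤ ENNReal.ofReal C * einterNorm i₀ i₁ x) ∧
  (∃ C > 0, ∀ x : V, esumNorm i₀ i₁ x ≤ ENNReal.ofReal C * N x)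

/-- `N` is an intermediate space of class `J_ρ(E₀,E₁)`, i.e. `(E₀,E₁)_{ρ,1;J} ↪ N`. -/
def IsClassJ (i₀ : E₀ →ₗ[ℝ] V) (i₁ : E₁ →ₗ[ℝ] V) (ρ : ℝ → ℝ) (N : V → ℝ≥0∞) : Prop :=
  IsIntermediate i₀ i₁ N ∧ ∃ C > 0, ∀ x : V, N x ≤ ENNReal.ofReal C * eJNorm i₀ i₁ ρ 1 x

/-- `N` is an intermediate space of class `K_ρ(E₀,E₁)`, i.e. `N ↪ (E₀,E₁)_{ρ,∞;K}`. -/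
def IsClassK (i₀ : E₀ →ₗ[ℝ] V) (i₁ : E₁ →ₗ[ℝ] V) (ρ : ℝ → ℝ) (N : V → ℝ≥0∞) : Prop :=
  IsIntermediate i₀ i₁ N ∧ ∃ C > 0, ∀ x : V, eKNorm i₀ i₁ ρ ⊤ x ≤ ENNReal.ofReal C * N x

end Couple

/-! ### The approximation hypothesis (AP) -/

/-- The couple with extended norms `N₀, N₁` satisfies the approximation hypothesis (AP). -/
def SatisfiesAP {V : Type*} [AddCommGroup V] [Module ℝ V] (N₀ N₁ : V → ℝ≥0∞) : Prop :=
  ∃ (P Pp Pm : ℕ → V →ₗ[ℝ] V) (C : ℝ≥0∞) (c : ℕ → ℝ≥0∞),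
    0 < C ∧ C ≠ ∞ ∧ Filter.Tendsto c Filter.atTop (nhds 0) ∧
    (∀ (n : ℕ) (x y : V), N₀ x ≠ ∞ → N₁ y ≠ ∞ →
      (P n (x + y) + Pp n (x + y) + Pm n (x + y) = x + y ∧
        N₀ (P n (x + y)) ≠ ∞ ∧ N₁ (P n (x + y)) ≠ ∞)) ∧
    (∀ n x, N₀ (P n x) ≤ C * N₀ x) ∧ (∀ n x, N₁ (P n x) ≤ C * N₁ x) ∧
    (∀ n x, N₀ (Pp n x) ≤ C * N₀ x) ∧ (∀ n x, N₁ (Pp n x) ≤ C * N₁ x) ∧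
    (∀ n x, N₀ (Pm n x) ≤ C * N₀ x) ∧ (∀ n x, N₁ (Pm n x) ≤ C * N₁ x) ∧
    (∀ n x, N₀ x ≠ ∞ → N₁ (Pp n x) ≤ c n * N₀ x) ∧
    (∀ n x, N₁ x ≠ ∞ → N₀ (Pm n x) ≤ c n * N₁ x)

/-! ### Bilinear operators -/

section Bilinear

variable {VE VF VG : Type*} [AddCommGroup VG]

/-- The norm of a bilinear operator between spaces given by extended norms. -/
def eBilNorm (NE : VE → ℝ≥0∞) (NF : VF → ℝ≥0∞) (NG : VG → ℝ≥0∞) (T : VE → VF → VG) : ℝ≥0∞ :=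
  ⨆ (x : VE) (_ : NE x ≤ 1) (y : VF) (_ : NF y ≤ 1), NG (T x y)

/-- Boundedness of a bilinear operator between spaces given by extended norms. -/
def eBilBdd (NE : VE → ℝ≥0∞) (NF : VF → ℝ≥0∞) (NG : VG → ℝ≥0∞) (T : VE → VF → VG) : Prop :=
  ∃ M : ℝ≥0, ∀ x y, NG (T x y) ≤ (M : ℝ≥0∞) * NE x * NF y

/-- Compactness of a bilinear operator: the image of the product of unit balls is
totally bounded in the target. -/
def eBilCompact (NE : VE → ℝ≥0∞) (NF : VF → ℝ≥0∞) (NG : VG → ℝ≥0∞) (T : VE → VF → VG) : Prop :=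
  ∀ ε : ℝ, 0 < ε → ∃ D : Finset VG, ∀ x y, NE x ≤ 1 → NF y ≤ 1 →
    ∃ c ∈ D, NG (T x y - c) < ENNReal.ofReal ε

end Bilinear

/-! ### A generic K-functional for a couple given by two extended norms -/

/-- Generic `K`-functional for a couple described by two extended norms on `W`. -/
def eKgen {W : Type*} [AddCommGroup W] (N₀ N₁ : W → ℝ≥0∞) (t : ℝ) (x : W) : ℝ≥0∞ :=
  ⨅ y : W, (N₀ (x - y) + ENNReal.ofReal t * N₁ y)

/-- The `(ρ,q;K)`-interpolation extended norm for a couple given by two extended norms. -/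
def eKNormGen {W : Type*} [AddCommGroup W] (N₀ N₁ : W → ℝ≥0∞) (ρ : ℝ → ℝ) (q : ℝ≥0∞)
    (x : W) : ℝ≥0∞ :=
  eLq q (fun n => eKgen N₀ N₁ ((2 : ℝ) ^ n) x / ENNReal.ofReal (ρ ((2 : ℝ) ^ n)))

/-! ### Lions and Persson approximation conditions -/

section LP

variable {E₀ E₁ V : Type*} [NormedAddCommGroup E₀] [NormedSpace ℝ E₀]
  [NormedAddCommGroup E₁] [NormedSpace ℝ E₁] [AddCommGroup V] [Module ℝ V]

/-- Lions' approximation condition for the couple `(E₀, E₁)`. -/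
def LionsCondition (i₀ : E₀ →ₗ[ℝ] V) (i₁ : E₁ →ₗ[ℝ] V) : Prop :=
  ∃ P : ℕ → V →ₗ[ℝ] V,
    (∀ (n : ℕ) (a : E₀), einterNorm i₀ i₁ (P n (i₀ a)) ≠ ∞) ∧
    (∀ (n : ℕ) (b : E₁), einterNorm i₀ i₁ (P n (i₁ b)) ≠ ∞) ∧
    (∀ a : E₀, Filter.Tendsto (fun n => enormOf i₀ (P n (i₀ a) - i₀ a)) Filter.atTop (nhds 0)) ∧
    (∀ b : E₁, Filter.Tendsto (fun n => enormOf i₁ (P n (i₁ b) - i₁ b)) Filter.atTop (nhds 0))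

/-- Persson's approximation condition for the couple `(E₀, E₁)`. -/
def PerssonCondition (i₀ : E₀ →ₗ[ℝ] V) (i₁ : E₁ →ₗ[ℝ] V) : Prop :=
  ∀ K : Set E₀, IsCompact K →
    ∃ (C : ℝ) (P : Set (V →ₗ[ℝ] V)), 0 < C ∧
      (∀ p ∈ P,
        (∀ a : E₀, einterNorm i₀ i₁ (p (i₀ a)) ≠ ∞ ∧
          enormOf i₀ (p (i₀ a)) ≤ ENNReal.ofReal (C * ‖a‖)) ∧
        (∀ b : E₁, einterNorm i₀ i₁ (p (i₁ b)) ≠ ∞ ∧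
          enormOf i₁ (p (i₁ b)) ≤ ENNReal.ofReal (C * ‖b‖))) ∧
      (∀ ε > 0, ∃ p ∈ P, ∀ x ∈ K, enormOf i₀ (p (i₀ x) - i₀ x) < ENNReal.ofReal ε)

end LP

end

open Asymptotics Topology

/-!
The dilation function `ρ̄` is positive and submultiplicative on `(0, ∞)`, hence so are
`t ↦ ρ̄ t⁻¹` and `t ↦ ρ̄ t / t`, and both are integrable against `dt/t` on `(1, ∞)`. In logarithmic
coordinates such a function becomes `g` with `g x ≤ g y * g (x - y)`, so that by AM-GM
`√(g x) ≤ (g y + g (x - y)) / 2`. Averaging over `y ∈ (0, x)` gives `x * √(g x) ≤ ∫ g`, and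
therefore `g x = O(x⁻²)`.

Pseudo-concavity of `ρ` amounts to `ρ̄ u ≤ C * max 1 u`. For small and large `u` this follows from
the two limits, and submultiplicativity reduces intermediate `u` to small ones by a fixed dilation.
-/

theorem mul_sqrt_le_integral_of_le_mul_sub {g : ℝ → ℝ} {x : ℝ} (hx : 0 ≤ x)
    (hg_nonneg : ∀ y ∈ Ioo 0 x, 0 ≤ g y) (hg_le : ∀ y ∈ Ioo 0 x, g x ≤ g y * g (x - y))
    (hg_int : IntervalIntegrable g volume 0 x) :
    x * √(g x) ≤ ∫ y in 0..x, g y := by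
  have hg_int_reflect : IntervalIntegrable (fun y => g (x - y)) volume 0 x := by
    simpa only [sub_zero, sub_self] using (hg_int.comp_sub_left x).symm
  have sqrt_le_average : ∀ y ∈ Ioo 0 x, √(g x) ≤ (g y + g (x - y)) / 2 := by
    intro y hy
    have hgy := hg_nonneg y hy
    have hgxy := hg_nonneg (x - y) ⟨sub_pos.2 hy.2, sub_lt_self x hy.1⟩
    refine Real.sqrt_le_iff.2 ⟨by positivity, (hg_le y hy).trans ?_⟩
    linarith [four_mul_le_sq_add (g y) (g (x - y))]
  calc x * √(g x)
      = ∫ _ in 0..x, √(g x) := by simp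
    _ ≤ ∫ y in 0..x, (g y + g (x - y)) / 2 :=
      intervalIntegral.integral_mono_on_of_le_Ioo hx intervalIntegrable_const
        ((hg_int.add hg_int_reflect).div_const 2) sqrt_le_average
    _ = ∫ y in 0..x, g y := by
      rw [intervalIntegral.integral_div, intervalIntegral.integral_add hg_int hg_int_reflect,
        intervalIntegral.integral_comp_sub_left, sub_zero, sub_self, add_self_div_two]

theorem tendsto_atTop_zero_of_map_add_le_mul {g : ℝ → ℝ} (hg_nonneg : ∀ x > 0, 0 ≤ g x)
    (hg_add : ∀ x > 0, ∀ y > 0, g (x + y) ≤ g x * g y) (hg_int : IntegrableOn g (Ioi 0)) :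
    Tendsto g atTop (𝓝 0) := by
  have mul_sqrt_le : ∀ x > 0, x * √(g x) ≤ ∫ y in Ioi 0, g y := by
    intro x hx
    have hg_int_Ioc : IntegrableOn g (Ioc 0 x) := hg_int.mono_set Ioc_subset_Ioi_self
    calc x * √(g x)
        ≤ ∫ y in 0..x, g y := by
          refine mul_sqrt_le_integral_of_le_mul_sub hx.le (fun y hy => hg_nonneg y hy.1)
            (fun y hy => ?_) ((intervalIntegrable_iff_integrableOn_Ioc_of_le hx.le).2 hg_int_Ioc)
          simpa only [add_sub_cancel] using hg_add y hy.1 (x - y) (sub_pos.2 hy.2)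
      _ = ∫ y in Ioc 0 x, g y := intervalIntegral.integral_of_le hx.le
      _ ≤ ∫ y in Ioi 0, g y :=
          setIntegral_mono_set hg_int (ae_restrict_of_forall_mem measurableSet_Ioi hg_nonneg)
            Ioc_subset_Ioi_self.eventuallyLE
  have tendsto_bound : Tendsto (fun x : ℝ => ((∫ y in Ioi 0, g y) / x) ^ 2) atTop (𝓝 0) := by
    simpa using ((tendsto_const_nhds (x := ∫ y in Ioi 0, g y)).div_atTop tendsto_id).pow 2
  refine squeeze_zero' ?_ ?_ tendsto_bound
  · filter_upwards [eventually_gt_atTop 0] with x hx using hg_nonneg x hx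
  · filter_upwards [eventually_gt_atTop 0] with x hx
    have sqrt_le : √(g x) ≤ (∫ y in Ioi 0, g y) / x := (le_div_iff₀' hx).2 (mul_sqrt_le x hx)
    exact (Real.sqrt_le_iff.1 sqrt_le).2

theorem tendsto_atTop_zero_of_map_mul_le_mul {f : ℝ → ℝ} (hf_nonneg : ∀ t > 1, 0 ≤ f t)
    (hf_mul : ∀ s > 1, ∀ t > 1, f (s * t) ≤ f s * f t)
    (hf_int : IntegrableOn (fun t => t⁻¹ * f t) (Ioi 1)) :
    Tendsto f atTop (𝓝 0) := by
  have tendsto_comp_exp : Tendsto (fun x => f (Real.exp x)) atTop (𝓝 0) := by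
    refine tendsto_atTop_zero_of_map_add_le_mul
      (fun x hx => hf_nonneg _ (Real.one_lt_exp_iff.2 hx)) (fun x hx y hy => ?_) ?_
    · rw [Real.exp_add]
      exact hf_mul _ (Real.one_lt_exp_iff.2 hx) _ (Real.one_lt_exp_iff.2 hy)
    · rw [← Real.exp_zero, ← integrableOn_comp_exp_Ioi] at hf_int
      simpa only [smul_eq_mul, mul_inv_cancel_left₀ (Real.exp_ne_zero _)] using hf_int
  rw [← Real.map_exp_atTop]
  exact tendsto_map'_iff.2 tendsto_comp_exp

theorem integrableOn_Ioi_inv_smul_comp_inv_iff {E : Type*} [NormedAddCommGroup E] [NormedSpace ℝ E]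
    {f : ℝ → E} {a : ℝ} (ha : 0 < a) :
    IntegrableOn (fun t => t⁻¹ • f t⁻¹) (Ioi a) ↔
      IntegrableOn (fun t => t⁻¹ • f t) (Ioo 0 a⁻¹) := by
  have pos_of_mem : ∀ t ∈ Ioi a, 0 < t := fun t ht => ha.trans ht
  rw [← inv_Ioi₀ ha, ← image_inv_eq_inv,
    integrableOn_image_iff_integrableOn_deriv_smul_of_antitoneOn measurableSet_Ioi
      (fun t ht => (hasDerivAt_inv (pos_of_mem t ht).ne').hasDerivWithinAt)
      (fun s hs t _ hst => inv_anti₀ (pos_of_mem s hs) hst)]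
  refine integrableOn_congr_fun (fun t ht => ?_) measurableSet_Ioi
  have ht_ne : t ≠ 0 := (pos_of_mem t ht).ne'
  rw [smul_smul]
  congr 1
  field_simp

theorem tendsto_nhdsGT_zero_of_map_mul_le_mul {f : ℝ → ℝ} (hf_nonneg : ∀ t ∈ Ioo 0 1, 0 ≤ f t)
    (hf_mul : ∀ s ∈ Ioo 0 1, ∀ t ∈ Ioo 0 1, f (s * t) ≤ f s * f t)
    (hf_int : IntegrableOn (fun t => t⁻¹ * f t) (Ioo 0 1)) :
    Tendsto f (𝓝[>] 0) (𝓝 0) := by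
  have inv_mem : ∀ t > (1 : ℝ), t⁻¹ ∈ Ioo 0 1 := fun t ht =>
    ⟨inv_pos.2 (zero_lt_one.trans ht), inv_lt_one_of_one_lt₀ ht⟩
  have tendsto_comp_inv : Tendsto (fun t => f t⁻¹) atTop (𝓝 0) := by
    refine tendsto_atTop_zero_of_map_mul_le_mul (fun t ht => hf_nonneg _ (inv_mem t ht))
      (fun s hs t ht => ?_) ?_
    · rw [mul_inv]
      exact hf_mul _ (inv_mem s hs) _ (inv_mem t ht)
    · exact (integrableOn_Ioi_inv_smul_comp_inv_iff one_pos).2 (inv_one (G := ℝ).symm ▸ hf_int)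
  simpa only [Function.comp_def, inv_inv] using tendsto_comp_inv.comp tendsto_inv_nhdsGT_zero

theorem bddAbove_image_Ioc_of_map_mul_le_mul {f : ℝ → ℝ} (hf_nonneg : ∀ t > 0, 0 ≤ f t)
    (hf_mul : ∀ s > 0, ∀ t > 0, f (s * t) ≤ f s * f t)
    (hf_zero : f =O[𝓝[>] 0] (fun _ => (1 : ℝ))) {A : ℝ} (hA : 0 < A) :
    BddAbove (f '' Ioc 0 A) := by
  obtain ⟨a, hf_le⟩ := hf_zero.bound
  obtain ⟨δ, hδ : 0 < δ, hf_near_zero⟩ := mem_nhdsGT_iff_exists_Ioc_subset.1 hf_le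
  have hAδ : 0 < A / δ := div_pos hA hδ
  refine ⟨a * f (A / δ), forall_mem_image.2 fun u hu => ?_⟩
  have hv : u / (A / δ) ∈ Ioc 0 δ :=
    ⟨div_pos hu.1 hAδ, by rw [div_le_iff₀ hAδ, mul_div_cancel₀ A hδ.ne']; exact hu.2⟩
  have norm_le : ‖f (u / (A / δ))‖ ≤ a := by simpa using hf_near_zero hv
  calc f u = f (u / (A / δ) * (A / δ)) := by rw [div_mul_cancel₀ u hAδ.ne']
    _ ≤ f (u / (A / δ)) * f (A / δ) := hf_mul _ hv.1 _ hAδ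
    _ ≤ a * f (A / δ) :=
      mul_le_mul_of_nonneg_right ((le_abs_self _).trans norm_le) (hf_nonneg _ hAδ)

theorem exists_le_mul_max_one_of_map_mul_le_mul {f : ℝ → ℝ} (hf_nonneg : ∀ t > 0, 0 ≤ f t)
    (hf_mul : ∀ s > 0, ∀ t > 0, f (s * t) ≤ f s * f t)
    (hf_zero : f =O[𝓝[>] 0] (fun _ => (1 : ℝ))) (hf_top : f =O[atTop] id) :
    ∃ C > 0, ∀ u > 0, f u ≤ C * max 1 u := by
  obtain ⟨b, hb, hf_le⟩ := hf_top.exists_pos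
  obtain ⟨A, hf_near_top⟩ := ((eventually_gt_atTop 0).and hf_le.bound).exists_forall_of_atTop
  obtain ⟨c, hc⟩ := bddAbove_image_Ioc_of_map_mul_le_mul hf_nonneg hf_mul hf_zero
    (hf_near_top A le_rfl).1
  refine ⟨max b c, lt_max_of_lt_left hb, fun u hu => ?_⟩
  rcases le_total u A with huA | hAu
  · calc f u ≤ c := hc (mem_image_of_mem f ⟨hu, huA⟩)
      _ ≤ max b c := le_max_right b c
      _ ≤ max b c * max 1 u :=
        le_mul_of_one_le_right (hb.le.trans (le_max_left b c)) (le_max_left 1 u)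
  · calc f u ≤ ‖f u‖ := le_abs_self _
      _ ≤ b * ‖u‖ := (hf_near_top u hAu).2
      _ = b * u := by rw [Real.norm_of_nonneg hu.le]
      _ ≤ max b c * max 1 u :=
        mul_le_mul (le_max_left b c) (le_max_right 1 u) hu.le (hb.le.trans (le_max_left b c))

/-- A positive function on `(0, ∞)`, not necessarily continuous or normalized at `1`, whose dilation
function `ρ̄ = rbar ρ` is finite. -/
structure IsDilationBounded (ρ : ℝ → ℝ) : Prop where
  pos : ∀ t > 0, 0 < ρ t
  bdd : ∀ s > 0, BddAbove {r : ℝ | ∃ t > 0, r = ρ (s * t) / ρ t}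

namespace IsDilationBounded

variable {ρ : ℝ → ℝ}

theorem map_mul_le_rbar_mul (hρ : IsDilationBounded ρ) {s t : ℝ} (hs : 0 < s) (ht : 0 < t) :
    ρ (s * t) ≤ rbar ρ s * ρ t :=
  (div_le_iff₀ (hρ.pos t ht)).1 (le_csSup (hρ.bdd s hs) ⟨t, ht, rfl⟩)

theorem rbar_pos (hρ : IsDilationBounded ρ) {s : ℝ} (hs : 0 < s) : 0 < rbar ρ s :=
  pos_of_mul_pos_left ((hρ.pos _ (mul_pos hs one_pos)).trans_le
    (hρ.map_mul_le_rbar_mul hs one_pos)) (hρ.pos 1 one_pos).le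

theorem rbar_mul_le (hρ : IsDilationBounded ρ) {s t : ℝ} (hs : 0 < s) (ht : 0 < t) :
    rbar ρ (s * t) ≤ rbar ρ s * rbar ρ t := by
  refine csSup_le ⟨_, 1, one_pos, rfl⟩ ?_
  rintro _ ⟨u, hu, rfl⟩
  rw [div_le_iff₀ (hρ.pos u hu)]
  calc ρ (s * t * u) = ρ (s * (t * u)) := by rw [mul_assoc]
    _ ≤ rbar ρ s * ρ (t * u) := hρ.map_mul_le_rbar_mul hs (mul_pos ht hu)
    _ ≤ rbar ρ s * (rbar ρ t * ρ u) :=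
      mul_le_mul_of_nonneg_left (hρ.map_mul_le_rbar_mul ht hu) (hρ.rbar_pos hs).le
    _ = rbar ρ s * rbar ρ t * ρ u := (mul_assoc _ _ _).symm

theorem tendsto_rbar_nhdsGT_zero (hρ : IsDilationBounded ρ)
    (h_int : IntegrableOn (fun t => min 1 t⁻¹ * rbar ρ t * t⁻¹) (Ioi 0)) :
    Tendsto (rbar ρ) (𝓝[>] 0) (𝓝 0) := by
  refine tendsto_nhdsGT_zero_of_map_mul_le_mul (fun t ht => (hρ.rbar_pos ht.1).le)
    (fun s hs t ht => hρ.rbar_mul_le hs.1 ht.1) ?_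
  refine (h_int.mono_set Ioo_subset_Ioi_self).congr_fun (fun t ht => ?_) measurableSet_Ioo
  have min_eq : min 1 t⁻¹ = 1 := min_eq_left ((one_le_inv₀ ht.1).2 ht.2.le)
  simp only [min_eq, one_mul, mul_comm t⁻¹]

theorem tendsto_rbar_div_atTop (hρ : IsDilationBounded ρ)
    (h_int : IntegrableOn (fun t => min 1 t⁻¹ * rbar ρ t * t⁻¹) (Ioi 0)) :
    Tendsto (fun t => rbar ρ t / t) atTop (𝓝 0) := by
  have pos_of_one_lt : ∀ t > (1 : ℝ), 0 < t := fun t ht => one_pos.trans ht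
  refine tendsto_atTop_zero_of_map_mul_le_mul
    (fun t ht => (div_pos (hρ.rbar_pos (pos_of_one_lt t ht)) (pos_of_one_lt t ht)).le)
    (fun s hs t ht => ?_) ?_
  · have hs_pos := pos_of_one_lt s hs
    have ht_pos := pos_of_one_lt t ht
    rw [div_mul_div_comm]
    gcongr
    exact hρ.rbar_mul_le hs_pos ht_pos
  · refine (h_int.mono_set (Ioi_subset_Ioi zero_le_one)).congr_fun (fun t ht => ?_)
      measurableSet_Ioi
    have min_eq : min 1 t⁻¹ = t⁻¹ := min_eq_right (inv_le_one_of_one_le₀ (le_of_lt ht))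
    simp only [min_eq, div_eq_mul_inv]
    ring

theorem isPseudoConcave_of_rbar_le (hρ : IsDilationBounded ρ) {C : ℝ} (hC : 0 < C)
    (h_le : ∀ u > 0, rbar ρ u ≤ C * max 1 u) : IsPseudoConcave ρ := by
  refine ⟨C, hC, fun s hs t ht => ?_⟩
  calc ρ t = ρ (t / s * s) := by rw [div_mul_cancel₀ t hs.ne']
    _ ≤ rbar ρ (t / s) * ρ s := hρ.map_mul_le_rbar_mul (div_pos ht hs) hs
    _ ≤ C * max 1 (t / s) * ρ s :=
      mul_le_mul_of_nonneg_right (h_le _ (div_pos ht hs)) (hρ.pos s hs).le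

end IsDilationBounded

theorem statement12_general {ρ : ℝ → ℝ} (hρ : IsDilationBounded ρ)
    (h_int : IntegrableOn (fun t => min 1 t⁻¹ * rbar ρ t * t⁻¹) (Ioi 0)) :
    Tendsto (rbar ρ) (𝓝[>] 0) (𝓝 0) ∧ Tendsto (fun t => rbar ρ t / t) atTop (𝓝 0) ∧
      IsPseudoConcave ρ := by
  have tendsto_zero := hρ.tendsto_rbar_nhdsGT_zero h_int
  have tendsto_top := hρ.tendsto_rbar_div_atTop h_int
  have isBigO_id : rbar ρ =O[atTop] id := by
    refine isBigO_of_div_tendsto_nhds ?_ 0 tendsto_top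
    filter_upwards [eventually_ne_atTop 0] with t ht h using absurd h ht
  obtain ⟨C, hC, rbar_le⟩ := exists_le_mul_max_one_of_map_mul_le_mul
    (fun t ht => (hρ.rbar_pos ht).le)
    (fun s hs t ht => hρ.rbar_mul_le hs ht) (tendsto_zero.isBigO_one ℝ) isBigO_id
  exact ⟨tendsto_zero, tendsto_top, hρ.isPseudoConcave_of_rbar_le hC rbar_le⟩

/-- For `ρ ∈ ℬ^{+-}` one has `ρ̄(t) = o(max(1,t))` at `0⁺` and at `∞`,
i.e. `ρ̄(t) → 0` as `t → 0⁺` and `ρ̄(t)/t → 0` as `t → ∞`; in particular `ρ` is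
pseudo-concave, so `ℬ^{+-} ⊆ 𝒫^{+-}`. -/
theorem statement12 (ρ : ℝ → ℝ) (hρ : IsClassBpm ρ) :
    Filter.Tendsto (rbar ρ) (nhdsWithin 0 (Set.Ioi 0)) (nhds 0) ∧
    Filter.Tendsto (fun t => rbar ρ t / t) Filter.atTop (nhds 0) ∧
    IsPseudoConcave ρ :=
  statement12_general ⟨hρ.pos, hρ.bdd⟩ hρ.integ
end

section
/- Let ρ be a function parameter of class ℬ^{+−} and let 0 < q ≤ ∞. Then ‖ρ(t)⁻¹ min(1,t)‖_{L^q_*} < ∞, i.e. ∫₀^∞ (min(1,t)/ρ(t))^q dt/t < ∞ when q < ∞, and sup_{t>0} min(1,t)/ρ(t) < ∞ when q = ∞. -/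
open Filter Set MeasureTheory ENNReal NNReal

/-!
If `rbar ρ s ≥ 1` for all `s < 1`, or `rbar ρ s ≥ s` for all `s > 1`, then the integral defining
`ℬ^{+-}` diverges logarithmically at `0`, respectively at `∞`. So there are `s < 1` with
`rbar ρ s < 1` and `σ > 1` with `rbar ρ σ < σ`. With `w t = min 1 t / ρ t`, they give
`w (s⁻¹ t) ≤ rbar ρ s * w t` for `t ≥ 1` and `w (σ⁻¹ t) ≤ σ⁻¹ * rbar ρ σ * w t` for `t ≤ 1`.
Iterating these contractions yields `w t = O(t ^ (-α))` on `[1, ∞)` and `w t = O(t ^ β)` on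
`(0, 1]` with `α, β > 0`.
-/

section PowerDecay

open Asymptotics Topology

theorem bddAbove_image_Ici_of_mul_le {β : Type*} [Preorder β] {g : ℝ → β} {s : ℝ} (hs : 1 < s)
    (hg : BddAbove (g '' Icc 1 s)) (hmul : ∀ t ≥ 1, g (s * t) ≤ g t) :
    BddAbove (g '' Ici 1) := by
  obtain ⟨M, hM⟩ := hg
  have pow_mul_le (n : ℕ) {t : ℝ} (ht : 1 ≤ t) : g (s ^ n * t) ≤ g t := by
    induction n with
    | zero => simp
    | succ n ih =>
      rw [pow_succ', mul_assoc]
      exact (hmul _ (one_le_mul_of_one_le_of_one_le (one_le_pow₀ hs.le) ht)).trans ih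
  refine ⟨M, forall_mem_image.2 fun t ht => ?_⟩
  obtain ⟨n, hn, hn'⟩ := exists_nat_pow_near ht hs
  have hsn : 0 < s ^ n := by positivity
  have one_le_div_pow : 1 ≤ t / s ^ n := (one_le_div hsn).2 hn
  have div_pow_le : t / s ^ n ≤ s := (div_le_iff₀ hsn).2 (pow_succ' s n ▸ hn'.le)
  calc g t = g (s ^ n * (t / s ^ n)) := by rw [mul_div_cancel₀ _ hsn.ne']
    _ ≤ g (t / s ^ n) := pow_mul_le n one_le_div_pow
    _ ≤ M := hM (mem_image_of_mem g ⟨one_le_div_pow, div_pow_le⟩)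

variable {E : Type*} [SeminormedAddCommGroup E] {f : ℝ → E} {s r : ℝ}

theorem exists_isBigO_rpow_neg_of_norm_mul_le (hs : 1 < s) (hr₀ : 0 < r) (hr₁ : r < 1)
    (hf : ContinuousOn f (Icc 1 s)) (hmul : ∀ t ≥ 1, ‖f (s * t)‖ ≤ r * ‖f t‖) :
    ∃ α : ℝ, 0 < α ∧ f =O[𝓟 (Ici 1)] fun t => t ^ (-α) := by
  have hs₀ : 0 < s := one_pos.trans hs
  -- The exponent for which `t ^ α * ‖f t‖` does not increase under `t ↦ s * t`.
  let α := -Real.logb s r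
  have rpow_α : s ^ α = r⁻¹ := by rw [Real.rpow_neg hs₀.le, Real.rpow_logb hs₀ hs.ne' hr₀]
  have weighted_cont : ContinuousOn (fun t => t ^ α * ‖f t‖) (Icc 1 s) :=
    (continuousOn_id.rpow_const fun t ht => .inl (one_pos.trans_le ht.1).ne').mul hf.norm
  have weighted_mul_le (t : ℝ) (ht : t ≥ 1) : (s * t) ^ α * ‖f (s * t)‖ ≤ t ^ α * ‖f t‖ := by
    have ht₀ : 0 ≤ t := zero_le_one.trans ht
    calc (s * t) ^ α * ‖f (s * t)‖ ≤ (s * t) ^ α * (r * ‖f t‖) := by gcongr; exact hmul t ht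
      _ = t ^ α * ‖f t‖ := by rw [Real.mul_rpow hs₀.le ht₀, rpow_α]; field_simp
  obtain ⟨M, hM⟩ := bddAbove_image_Ici_of_mul_le hs
    (isCompact_Icc.bddAbove_image weighted_cont) weighted_mul_le
  refine ⟨α, neg_pos.2 (Real.logb_neg hs hr₀ hr₁), isBigO_principal.2 ⟨M, fun t ht => ?_⟩⟩
  have ht₀ : 0 < t := one_pos.trans_le ht
  rw [Real.norm_of_nonneg (by positivity), Real.rpow_neg ht₀.le, ← div_eq_mul_inv,
    le_div_iff₀' (by positivity)]
  exact hM (mem_image_of_mem _ ht)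

theorem exists_isBigO_rpow_of_norm_mul_le (hs₀ : 0 < s) (hs₁ : s < 1) (hr₀ : 0 < r) (hr₁ : r < 1)
    (hf : ContinuousOn f (Icc s 1)) (hmul : ∀ t ∈ Ioc 0 1, ‖f (s * t)‖ ≤ r * ‖f t‖) :
    ∃ α : ℝ, 0 < α ∧ f =O[𝓟 (Ioc 0 1)] fun t => t ^ α := by
  have inv_cont : ContinuousOn (fun t => f t⁻¹) (Icc 1 s⁻¹) :=
    hf.comp (continuousOn_inv₀.mono fun t ht => (one_pos.trans_le ht.1).ne') fun t ht =>
      ⟨(le_inv_comm₀ hs₀ (one_pos.trans_le ht.1)).2 ht.2, inv_le_one_of_one_le₀ ht.1⟩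
  obtain ⟨α, hα, hO⟩ := exists_isBigO_rpow_neg_of_norm_mul_le ((one_lt_inv₀ hs₀).2 hs₁) hr₀ hr₁
    inv_cont fun t ht => by
      rw [mul_inv, inv_inv]
      exact hmul t⁻¹ ⟨inv_pos.2 (one_pos.trans_le ht), inv_le_one_of_one_le₀ ht⟩
  have tendsto_inv : Tendsto (·⁻¹) (𝓟 (Ioc (0 : ℝ) 1)) (𝓟 (Ici 1)) :=
    tendsto_principal_principal.2 fun t ht => (one_le_inv₀ ht.1).2 ht.2
  refine ⟨α, hα, (hO.comp_tendsto tendsto_inv).congr' (.of_forall fun t => ?_) ?_⟩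
  · simp only [Function.comp_apply, inv_inv]
  · filter_upwards [mem_principal_self _] with t ht
    rw [Function.comp_apply, Real.inv_rpow ht.1.le, Real.rpow_neg ht.1.le, inv_inv]

theorem isBigO_one_Ioi_of_isBigO_rpow {α β : ℝ} (hα : 0 ≤ α) (hβ : 0 ≤ β)
    (htop : f =O[𝓟 (Ici 1)] fun t => t ^ (-α)) (hzero : f =O[𝓟 (Ioc 0 1)] fun t => t ^ β) :
    f =O[𝓟 (Ioi 0)] fun _ => (1 : ℝ) := by
  have rpow_neg_bdd : (fun t : ℝ => t ^ (-α)) =O[𝓟 (Ici 1)] fun _ => (1 : ℝ) :=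
    .of_norm_eventuallyLE <| eventually_principal.2 fun t (ht : 1 ≤ t) =>
      (Real.norm_of_nonneg (by positivity)).trans_le
        (Real.rpow_le_one_of_one_le_of_nonpos ht (neg_nonpos.2 hα))
  have rpow_bdd : (fun t : ℝ => t ^ β) =O[𝓟 (Ioc 0 1)] fun _ => (1 : ℝ) :=
    .of_norm_eventuallyLE <| eventually_principal.2 fun t ⟨ht₀, ht₁⟩ =>
      (Real.norm_of_nonneg (by positivity)).trans_le (Real.rpow_le_one ht₀.le ht₁ hβ)
  rw [← Ioc_union_Ici_eq_Ioi one_pos, ← sup_principal]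
  exact (hzero.trans rpow_bdd).sup (htop.trans rpow_neg_bdd)

theorem integrableOn_rpow_mul_inv_of_isBigO_rpow {g : ℝ → ℝ} {α β p : ℝ} (hα : 0 < α) (hβ : 0 < β)
    (hp : 0 < p) (hg : ContinuousOn g (Ioi 0)) (htop : g =O[atTop] fun t => t ^ (-α))
    (hzero : g =O[𝓝[>] 0] fun t => t ^ β) :
    IntegrableOn (fun t => g t ^ p * t⁻¹) (Ioi 0) := by
  have isBigO_top : (fun t => g t ^ p) =O[atTop] (· ^ (-(α * p))) := by
    refine (htop.rpow hp.le ?_).congr' .rfl ?_ <;>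
      filter_upwards [eventually_ge_atTop 0] with t ht
    · exact Real.rpow_nonneg ht _
    · rw [← Real.rpow_mul ht, neg_mul]
  have isBigO_zero : (fun t => g t ^ p) =O[𝓝[>] 0] (· ^ (-(-(β * p)))) := by
    refine (hzero.rpow hp.le ?_).congr' .rfl ?_ <;>
      filter_upwards [self_mem_nhdsWithin] with t (ht : 0 < t)
    · exact Real.rpow_nonneg ht.le _
    · rw [← Real.rpow_mul ht.le, neg_neg]
  have locallyIntegrable : LocallyIntegrableOn (fun t => g t ^ p) (Ioi 0) :=
    (hg.rpow_const fun _ _ => .inr hp.le).locallyIntegrableOn measurableSet_Ioi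
  -- Integrability with respect to `dt / t` is convergence of the Mellin transform at `0`.
  refine (mellin_convergent_of_isBigO_scalar (s := 0) locallyIntegrable isBigO_top
    (by positivity) isBigO_zero (neg_lt_zero.2 (by positivity))).congr_fun (fun t _ => ?_)
    measurableSet_Ioi
  simp only [zero_sub, Real.rpow_neg_one, mul_comm]

end PowerDecay

section FunctionParameter

open Asymptotics

variable {ρ : ℝ → ℝ} {s t : ℝ}

namespace IsClassB

theorem apply_mul_le (hρ : IsClassB ρ) (hs : 0 < s) (ht : 0 < t) :
    ρ (s * t) ≤ rbar ρ s * ρ t :=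
  (div_le_iff₀ (hρ.pos t ht)).1 (le_csSup (hρ.bdd s hs) ⟨t, ht, rfl⟩)

theorem rbar_pos (hρ : IsClassB ρ) (hs : 0 < s) : 0 < rbar ρ s :=
  pos_of_mul_pos_left ((hρ.pos _ (mul_pos hs one_pos)).trans_le (hρ.apply_mul_le hs one_pos))
    (hρ.pos 1 one_pos).le

theorem inv_apply_inv_mul_le (hρ : IsClassB ρ) (hs : 0 < s) (ht : 0 < t) :
    (ρ (s⁻¹ * t))⁻¹ ≤ rbar ρ s * (ρ t)⁻¹ := by
  have hst : 0 < s⁻¹ * t := by positivity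
  rw [← div_eq_mul_inv, le_div_iff₀ (hρ.pos t ht), inv_mul_le_iff₀ (hρ.pos _ hst), mul_comm]
  simpa only [mul_inv_cancel_left₀ hs.ne'] using hρ.apply_mul_le hs hst

theorem min_div_nonneg (hρ : IsClassB ρ) (ht : 0 < t) : 0 ≤ min 1 t / ρ t :=
  div_nonneg (le_min zero_le_one ht.le) (hρ.pos t ht).le

theorem continuousOn_min_div (hρ : IsClassB ρ) :
    ContinuousOn (fun t => min 1 t / ρ t) (Ioi 0) :=
  ContinuousOn.div (by fun_prop) hρ.cont fun t ht => (hρ.pos t ht).ne'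

theorem exists_min_div_isBigO_Ici (hρ : IsClassB ρ) (hs₀ : 0 < s) (hs₁ : s < 1)
    (hs : rbar ρ s < 1) :
    ∃ α : ℝ, 0 < α ∧ (fun t => min 1 t / ρ t) =O[𝓟 (Ici 1)] fun t => t ^ (-α) := by
  have one_lt_inv : 1 < s⁻¹ := (one_lt_inv₀ hs₀).2 hs₁
  refine exists_isBigO_rpow_neg_of_norm_mul_le one_lt_inv (hρ.rbar_pos hs₀) hs
    (hρ.continuousOn_min_div.mono fun t ht => one_pos.trans_le ht.1) fun t ht => ?_
  have ht₀ : 0 < t := one_pos.trans_le ht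
  have one_le_inv_mul : 1 ≤ s⁻¹ * t := one_le_mul_of_one_le_of_one_le one_lt_inv.le ht
  rw [Real.norm_of_nonneg (hρ.min_div_nonneg ht₀),
    Real.norm_of_nonneg (hρ.min_div_nonneg (by positivity)), min_eq_left ht,
    min_eq_left one_le_inv_mul, one_div, one_div]
  exact hρ.inv_apply_inv_mul_le hs₀ ht₀

theorem exists_min_div_isBigO_Ioc (hρ : IsClassB ρ) (hs₁ : 1 < s) (hs : rbar ρ s < s) :
    ∃ β : ℝ, 0 < β ∧ (fun t => min 1 t / ρ t) =O[𝓟 (Ioc 0 1)] fun t => t ^ β := by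
  have hs₀ : 0 < s := one_pos.trans hs₁
  have inv_lt_one : s⁻¹ < 1 := inv_lt_one_of_one_lt₀ hs₁
  refine exists_isBigO_rpow_of_norm_mul_le (inv_pos.2 hs₀) inv_lt_one
    (mul_pos (inv_pos.2 hs₀) (hρ.rbar_pos hs₀)) ((inv_mul_lt_one₀ hs₀).2 hs)
    (hρ.continuousOn_min_div.mono fun t ht => (inv_pos.2 hs₀).trans_le ht.1) fun t ⟨ht₀, ht₁⟩ => ?_
  have inv_mul_le_one : s⁻¹ * t ≤ 1 := mul_le_one₀ inv_lt_one.le ht₀.le ht₁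
  rw [Real.norm_of_nonneg (hρ.min_div_nonneg ht₀),
    Real.norm_of_nonneg (hρ.min_div_nonneg (by positivity)), min_eq_right ht₁,
    min_eq_right inv_mul_le_one]
  calc s⁻¹ * t / ρ (s⁻¹ * t) = s⁻¹ * t * (ρ (s⁻¹ * t))⁻¹ := div_eq_mul_inv _ _
    _ ≤ s⁻¹ * t * (rbar ρ s * (ρ t)⁻¹) := by gcongr; exact hρ.inv_apply_inv_mul_le hs₀ ht₀
    _ = s⁻¹ * rbar ρ s * (t / ρ t) := by ring

end IsClassB

namespace IsClassBpm

theorem exists_rbar_lt_one (hρ : IsClassBpm ρ) : ∃ s, 0 < s ∧ s < 1 ∧ rbar ρ s < 1 := by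
  by_contra! one_le_rbar
  have inv_integrable : IntegrableOn (fun t : ℝ => t ^ (-1 : ℝ)) (Ioo 0 1) := by
    refine (hρ.integ.mono_set Ioo_subset_Ioi_self).mono' (by fun_prop)
      (ae_restrict_of_forall_mem measurableSet_Ioo fun t ⟨ht₀, ht₁⟩ => ?_)
    rw [Real.norm_of_nonneg (by positivity), Real.rpow_neg_one,
      min_eq_left ((one_le_inv₀ ht₀).2 ht₁.le), one_mul]
    exact le_mul_of_one_le_left (by positivity) (one_le_rbar t ht₀ ht₁)
  exact lt_irrefl _ ((intervalIntegral.integrableOn_Ioo_rpow_iff one_pos).1 inv_integrable)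

theorem exists_rbar_lt_self (hρ : IsClassBpm ρ) : ∃ s, 1 < s ∧ rbar ρ s < s := by
  by_contra! le_rbar
  refine not_integrableOn_Ioi_inv (a := 1) ((hρ.integ.mono_set (Ioi_subset_Ioi zero_le_one)).mono'
    (by fun_prop) (ae_restrict_of_forall_mem measurableSet_Ioi fun t (ht₁ : 1 < t) => ?_))
  have ht₀ : 0 < t := one_pos.trans ht₁
  rw [Real.norm_of_nonneg (by positivity), min_eq_right (inv_le_one_of_one_le₀ ht₁.le)]
  have one_le_inv_mul_rbar : 1 ≤ t⁻¹ * rbar ρ t :=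
    (le_inv_mul_iff₀ ht₀).2 ((mul_one t).symm ▸ le_rbar t ht₁)
  exact le_mul_of_one_le_left (by positivity) one_le_inv_mul_rbar

end IsClassBpm

end FunctionParameter

/-- For `ρ ∈ ℬ^{+-}` and `0 < q ≤ ∞`, `‖ρ(t)⁻¹ min(1,t)‖_{L^q_*} < ∞`. -/
theorem statement13 (ρ : ℝ → ℝ) (hρ : IsClassBpm ρ) (q : ℝ≥0∞) (hq : 0 < q) :
    (q ≠ ∞ → MeasureTheory.IntegrableOn
      (fun t => (min 1 t / ρ t) ^ q.toReal * t⁻¹) (Set.Ioi 0)) ∧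
    (q = ∞ → ∃ M : ℝ, ∀ t > 0, min 1 t / ρ t ≤ M) := by
  have hB := hρ.toIsClassB
  obtain ⟨s, hs₀, hs₁, hs⟩ := hρ.exists_rbar_lt_one
  obtain ⟨σ, hσ₁, hσ⟩ := hρ.exists_rbar_lt_self
  obtain ⟨α, hα, htop⟩ := hB.exists_min_div_isBigO_Ici hs₀ hs₁ hs
  obtain ⟨β, hβ, hzero⟩ := hB.exists_min_div_isBigO_Ioc hσ₁ hσ
  refine ⟨fun hq_top => ?_, fun _ => ?_⟩
  · exact integrableOn_rpow_mul_inv_of_isBigO_rpow hα hβ (ENNReal.toReal_pos hq.ne' hq_top)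
      hB.continuousOn_min_div (htop.mono (le_principal_iff.2 (Ici_mem_atTop 1)))
      (hzero.mono (le_principal_iff.2 (Ioc_mem_nhdsGT one_pos)))
  · obtain ⟨M, hM⟩ := Asymptotics.isBigO_principal.1
      (isBigO_one_Ioi_of_isBigO_rpow hα.le hβ.le htop hzero)
    exact ⟨M, fun t ht => (Real.le_norm_self _).trans (by simpa using hM t ht)⟩
end

section
/- Let (E₀,E₁) be a Banach couple, ρ a function parameter of class ℬ^{+−} and 0 < q ≤ ∞. Then there is a constant C > 0 such that for every nonzero x ∈ E₀∩E₁, ‖x‖_{(E₀,E₁)_{ρ,q;J}} ≤ C ‖x‖_{E₀} ρ̄(‖x‖_{E₁}/‖x‖_{E₀}). -/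
open Filter Set MeasureTheory ENNReal NNReal

/-!
The one-term sum `x = u_n` is a `J`-representation of `x`, so the norm of `x` is at most
`J(2ⁿ, x) / ρ(2ⁿ)` for every `n`. Put `s = ‖x‖_{E₁} / ‖x‖_{E₀}` and choose `n` with
`1/2 < s 2ⁿ ≤ 1`. Then `J(2ⁿ, x) = ‖x‖_{E₀}`, while `ρ(s 2ⁿ)` is bounded below by the minimum `c`
of `ρ` on `[1/2, 1]`, whence `1 / ρ(2ⁿ) ≤ c⁻¹ ρ(s 2ⁿ) / ρ(2ⁿ) ≤ c⁻¹ ρ̄(s)`.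
-/

namespace IsClassB

variable {ρ : ℝ → ℝ}

theorem div_le_rbar (hρ : IsClassB ρ) {s t : ℝ} (hs : 0 < s) (ht : 0 < t) :
    ρ (s * t) / ρ t ≤ rbar ρ s :=
  le_csSup (hρ.bdd s hs) ⟨t, ht, rfl⟩

theorem inv_le_inv_mul_rbar (hρ : IsClassB ρ) {s t c : ℝ} (hs : 0 < s) (ht : 0 < t) (hc : 0 < c)
    (hcρ : c ≤ ρ (s * t)) : (ρ t)⁻¹ ≤ c⁻¹ * rbar ρ s := by
  have hρt : 0 < ρ t := hρ.pos t ht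
  calc (ρ t)⁻¹ = c⁻¹ * (c / ρ t) := by field_simp
    _ ≤ c⁻¹ * (ρ (s * t) / ρ t) := by gcongr
    _ ≤ c⁻¹ * rbar ρ s := by gcongr; exact hρ.div_le_rbar hs ht

theorem exists_pos_forall_le (hρ : IsClassB ρ) {K : Set ℝ} (hK : IsCompact K)
    (hK_pos : K ⊆ Ioi 0) : ∃ c > 0, ∀ t ∈ K, c ≤ ρ t :=
  hK.exists_forall_le' (hρ.cont.mono hK_pos) fun t ht => hρ.pos t (hK_pos ht)

end IsClassB

theorem exists_mul_zpow_mem_Ioc {K : Type*} [Field K] [LinearOrder K] [IsStrictOrderedRing K]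
    [Archimedean K] {x y : K} (hx : 0 < x) (hy : 1 < y) : ∃ n : ℤ, x * y ^ n ∈ Ioc y⁻¹ 1 := by
  have hy₀ : 0 < y := zero_lt_one.trans hy
  obtain ⟨m, hm_lt, hm_le⟩ := exists_mem_Ioc_zpow hx hy
  refine ⟨-(m + 1), ?_, ?_⟩
  · calc y⁻¹ = y ^ m * y ^ (-(m + 1)) := by rw [← zpow_add₀ hy₀.ne', ← zpow_neg_one]; congr 1; ring
      _ < x * y ^ (-(m + 1)) := by gcongr
  · rwa [zpow_neg, ← div_eq_mul_inv, div_le_one (zpow_pos hy₀ _)]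

theorem eLq_single {q : ℝ≥0∞} (hq : q ≠ 0) (n : ℤ) (r : ℝ≥0∞) : eLq q (Pi.single n r) = r := by
  unfold eLq
  split_ifs with hq_top
  · refine le_antisymm (iSup_le fun k => ?_) (le_iSup_of_le n ?_)
    · obtain rfl | hk := eq_or_ne k n
      · rw [Pi.single_eq_same]
      · rw [Pi.single_eq_of_ne hk]
        exact zero_le
    · rw [Pi.single_eq_same]
  · have hq_pos : 0 < q.toReal := ENNReal.toReal_pos hq hq_top
    rw [tsum_eq_single n fun k hk => by rw [Pi.single_eq_of_ne hk, ENNReal.zero_rpow_of_pos hq_pos],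
      Pi.single_eq_same, ← ENNReal.rpow_mul, mul_one_div_cancel hq_pos.ne', ENNReal.rpow_one]

section Couple

variable {E₀ E₁ V : Type*} [NormedAddCommGroup E₀] [NormedSpace ℝ E₀]
  [NormedAddCommGroup E₁] [NormedSpace ℝ E₁] [AddCommGroup V] [Module ℝ V]

theorem eKfun_zero (i₀ : E₀ →ₗ[ℝ] V) (i₁ : E₁ →ₗ[ℝ] V) (t : ℝ) : eKfun i₀ i₁ t 0 = 0 :=
  le_zero_iff.mp <| iInf₂_le_of_le 0 0 <| iInf_le_of_le (by simp) (by simp)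

variable {i₀ : E₀ →ₗ[ℝ] V} {i₁ : E₁ →ₗ[ℝ] V} {a : E₀} {b : E₁}

theorem isJRep_single (hab : i₀ a = i₁ b) (n : ℤ) :
    IsJRep i₀ i₁ (i₀ a) (Pi.single n a) (Pi.single n b) := by
  refine ⟨fun k => ?_, fun ε hε => ⟨{n}, fun G hG => ?_⟩⟩
  · obtain rfl | hk := eq_or_ne k n
    · simpa only [Pi.single_eq_same] using hab
    · simp only [Pi.single_eq_of_ne hk, map_zero]
  · have hsum : ∑ k ∈ G, i₀ ((Pi.single n a : ℤ → E₀) k) = i₀ a := by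
      rw [← map_sum, Finset.sum_pi_single', if_pos (Finset.singleton_subset_iff.mp hG)]
    rw [hsum, sub_self, esumNorm, eKfun_zero]
    exact ENNReal.ofReal_pos.mpr hε

theorem eJNorm_le_ofReal_max_div (ρ : ℝ → ℝ) {q : ℝ≥0∞} (hq : q ≠ 0) (hab : i₀ a = i₁ b) (n : ℤ) :
    eJNorm i₀ i₁ ρ q (i₀ a) ≤ ENNReal.ofReal (max ‖a‖ ((2 : ℝ) ^ n * ‖b‖) / ρ ((2 : ℝ) ^ n)) := by
  refine iInf₂_le_of_le _ _ <| iInf_le_of_le (isJRep_single hab n) (le_of_eq ?_)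
  rw [← eLq_single hq n (ENNReal.ofReal _)]
  congr 1 with k
  obtain rfl | hk := eq_or_ne k n
  · simp only [Pi.single_eq_same]
  · simp only [Pi.single_eq_of_ne hk, norm_zero, mul_zero, max_self, zero_div, ENNReal.ofReal_zero]

theorem eJNorm_le_inv_mul_norm_mul_rbar {ρ : ℝ → ℝ} (hρ : IsClassB ρ) {c : ℝ} (hc : 0 < c)
    (hcρ : ∀ t ∈ Icc (2⁻¹ : ℝ) 1, c ≤ ρ t) {q : ℝ≥0∞} (hq : q ≠ 0) (hab : i₀ a = i₁ b)
    (ha : a ≠ 0) (hb : b ≠ 0) :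
    eJNorm i₀ i₁ ρ q (i₀ a) ≤ ENNReal.ofReal (c⁻¹ * (‖a‖ * rbar ρ (‖b‖ / ‖a‖))) := by
  have ha_pos : 0 < ‖a‖ := norm_pos_iff.mpr ha
  have hs : 0 < ‖b‖ / ‖a‖ := div_pos (norm_pos_iff.mpr hb) ha_pos
  obtain ⟨n, hn⟩ := exists_mul_zpow_mem_Ioc hs (one_lt_two (α := ℝ))
  have hJ : max ‖a‖ (2 ^ n * ‖b‖) = ‖a‖ := by
    refine max_eq_left ?_
    rw [← div_le_one ha_pos, mul_comm, mul_div_right_comm]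
    exact hn.2
  refine (eJNorm_le_ofReal_max_div ρ hq hab n).trans (ENNReal.ofReal_le_ofReal ?_)
  calc max ‖a‖ (2 ^ n * ‖b‖) / ρ (2 ^ n) = ‖a‖ * (ρ (2 ^ n))⁻¹ := by rw [hJ, div_eq_mul_inv]
    _ ≤ ‖a‖ * (c⁻¹ * rbar ρ (‖b‖ / ‖a‖)) := by
      gcongr
      exact hρ.inv_le_inv_mul_rbar hs (by positivity) hc (hcρ _ (Ioc_subset_Icc_self hn))
    _ = c⁻¹ * (‖a‖ * rbar ρ (‖b‖ / ‖a‖)) := mul_left_comm _ _ _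

theorem statement14_general (i₀ : E₀ →ₗ[ℝ] V) (i₁ : E₁ →ₗ[ℝ] V) (hi₀ : Function.Injective i₀)
    {ρ : ℝ → ℝ} (hρ : IsClassB ρ) :
    ∃ C > 0, ∀ q : ℝ≥0∞, 0 < q → ∀ (a : E₀) (b : E₁), i₀ a = i₁ b → a ≠ 0 →
      eJNorm i₀ i₁ ρ q (i₀ a) ≤ ENNReal.ofReal (C * (‖a‖ * rbar ρ (‖b‖ / ‖a‖))) := by
  obtain ⟨c, hc, hcρ⟩ := hρ.exists_pos_forall_le (K := Icc 2⁻¹ 1) isCompact_Icc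
    fun t ht => lt_of_lt_of_le (by norm_num) ht.1
  refine ⟨c⁻¹, inv_pos.mpr hc, fun q hq a b hab ha => ?_⟩
  have hb : b ≠ 0 := by
    rintro rfl
    exact ha <| (map_eq_zero_iff i₀ hi₀).mp <| hab.trans (map_zero i₁)
  exact eJNorm_le_inv_mul_norm_mul_rbar hρ hc hcρ hq.ne' hab ha hb

end Couple

/-- for a Banach couple `(E₀,E₁)`, `ρ ∈ ℬ^{+-}` and `0 < q ≤ ∞`, there is
`C > 0` such that `‖x‖_{(E₀,E₁)_{ρ,q;J}} ≤ C ‖x‖_{E₀} ρ̄(‖x‖_{E₁}/‖x‖_{E₀})` for every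
nonzero `x ∈ E₀ ∩ E₁`. -/
theorem statement14 {E₀ E₁ V : Type*}
    [NormedAddCommGroup E₀] [NormedSpace ℝ E₀] [NormedAddCommGroup E₁] [NormedSpace ℝ E₁]
    [AddCommGroup V] [Module ℝ V] [TopologicalSpace V]
    (i₀ : E₀ →ₗ[ℝ] V) (i₁ : E₁ →ₗ[ℝ] V) (hE : IsBanachCouple i₀ i₁)
    (ρ : ℝ → ℝ) (hρ : IsClassBpm ρ) (q : ℝ≥0∞) (hq : 0 < q) :
    ∃ C > 0, ∀ (a : E₀) (b : E₁), i₀ a = i₁ b → a ≠ 0 →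
      eJNorm i₀ i₁ ρ q (i₀ a) ≤ ENNReal.ofReal (C * (‖a‖ * rbar ρ (‖b‖ / ‖a‖))) := by
  obtain ⟨C, hC, hbound⟩ := statement14_general i₀ i₁ hE.inj₀ hρ.toIsClassB
  exact ⟨C, hC, hbound q hq⟩
end

section
/- Let (E₀,E₁) be a Banach couple and consider the spaces ℓ¹₀(Δ_m) and ℓ¹₁(Δ_m). For n∈ℕ define the cutting operators on sequences u = (u_m)_{m∈ℤ}: P_n u keeps the coordinates with |m| ≤ n and sets the others to 0, P_n⁺ u keeps the coordinates with m ≥ n+1, and P_n⁻ u keeps the coordinates with m ≤ −n−1. Then I = P_n + P_n⁺ + P_n⁻; each of P_n, P_n⁺, P_n⁻ has operator norm at most 1 on ℓ¹_k(Δ_m) for k=0,1; P_n maps ℓ¹₀(Δ_m)+ℓ¹₁(Δ_m) into ℓ¹₀(Δ_m)∩ℓ¹₁(Δ_m); and ‖P_n⁺‖_{L(ℓ¹₀,ℓ¹₁)} ≤ 2^{−n} and ‖P_n⁻‖_{L(ℓ¹₁,ℓ¹₀)} ≤ 2^{−n}. Consequently the Banach couple (ℓ¹₀(Δ_m), ℓ¹₁(Δ_m))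 satisfies the Approximation Hypothesis (AP). -/
open Filter Set MeasureTheory ENNReal NNReal

noncomputable section

variable {E₀ E₁ V : Type*} [NormedAddCommGroup E₀] [NormedSpace ℝ E₀]
  [NormedAddCommGroup E₁] [NormedSpace ℝ E₁]
  [AddCommGroup V] [Module ℝ V] [TopologicalSpace V]

/-- The extended norm of `ℓ¹_k(Δ_m)` (for `k = 0, 1`): sequences `u_m ∈ E₀ ∩ E₁`
(coded as compatible pairs) with `∑_m 2^{-km} J(2^{-m}, u_m) < ∞`; the value is `∞`
on non-compatible pairs. -/
def ellOneNorm (i₀ : E₀ →ₗ[ℝ] V) (i₁ : E₁ →ₗ[ℝ] V) (k : ℕ)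
    (u : (ℤ → E₀) × (ℤ → E₁)) : ℝ≥0∞ :=
  (∑' m : ℤ, ENNReal.ofReal
      ((2 : ℝ) ^ (-(k : ℤ) * m) * max ‖u.1 m‖ ((2 : ℝ) ^ (-m) * ‖u.2 m‖))) +
  ⨅ (_ : ∀ m, i₀ (u.1 m) = i₁ (u.2 m)), 0

/-- The cutting operator keeping the coordinates `m` with `φ m`. -/
def cutOp (φ : ℤ → Prop) [DecidablePred φ] :
    ((ℤ → E₀) × (ℤ → E₁)) →ₗ[ℝ] ((ℤ → E₀) × (ℤ → E₁)) where
  toFun u := (fun m => if φ m then u.1 m else 0, fun m => if φ m then u.2 m else 0)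
  map_add' u v := by
    refine Prod.ext ?_ ?_ <;> funext m <;> by_cases h : φ m <;> simp [h]
  map_smul' c u := by
    refine Prod.ext ?_ ?_ <;> funext m <;> by_cases h : φ m <;> simp [h]

/-!
A cutting operator does not change `J(2^{-m}, u_m)` on the coordinates it keeps, so mapping
`ℓ¹_l` into `ℓ¹_k` with norm at most `c` only requires `2^{-km} ≤ c 2^{-lm}` on those coordinates.
For `k = l` the constant `c = 1` works; for `k < l` the ratio `2^{-(l-k)m}` of the weights is at
most `2^{-(l-k)n}` on `m > n`, and so is its inverse on `m < -n`. A finite cut of a sequence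
in `E₀ ∩ E₁` has finitely many nonzero terms and therefore lies in every `ℓ¹_k`.
-/

section Cutting

variable {W : Type*} [AddCommGroup W] [Module ℝ W] {i₀ : E₀ →ₗ[ℝ] W} {i₁ : E₁ →ₗ[ℝ] W}

/-- The pair of sequences `u` codes a sequence in `E₀ ∩ E₁`: its two components have the same
image in the ambient space. -/
def IsCompatible (i₀ : E₀ →ₗ[ℝ] W) (i₁ : E₁ →ₗ[ℝ] W) (u : (ℤ → E₀) × (ℤ → E₁)) : Prop :=
  ∀ m, i₀ (u.1 m) = i₁ (u.2 m)

theorem cutOp_fst_apply (φ : ℤ → Prop) [DecidablePred φ] (u : (ℤ → E₀) × (ℤ → E₁)) (m : ℤ) :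
    (cutOp φ u).1 m = if φ m then u.1 m else 0 := rfl

theorem cutOp_snd_apply (φ : ℤ → Prop) [DecidablePred φ] (u : (ℤ → E₀) × (ℤ → E₁)) (m : ℤ) :
    (cutOp φ u).2 m = if φ m then u.2 m else 0 := rfl

theorem IsCompatible.add {u v : (ℤ → E₀) × (ℤ → E₁)} (hu : IsCompatible i₀ i₁ u)
    (hv : IsCompatible i₀ i₁ v) : IsCompatible i₀ i₁ (u + v) := fun m => by
  simp [hu m, hv m]

theorem IsCompatible.cutOp {u : (ℤ → E₀) × (ℤ → E₁)} (hu : IsCompatible i₀ i₁ u)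
    (φ : ℤ → Prop) [DecidablePred φ] : IsCompatible i₀ i₁ (cutOp φ u) := fun m => by
  by_cases hm : φ m <;> simp [cutOp_fst_apply, cutOp_snd_apply, hm, hu m]

theorem ellOneNorm_of_isCompatible (k : ℕ) {u : (ℤ → E₀) × (ℤ → E₁)}
    (hu : IsCompatible i₀ i₁ u) :
    ellOneNorm i₀ i₁ k u = ∑' m : ℤ, ENNReal.ofReal
      ((2 : ℝ) ^ (-(k : ℤ) * m) * max ‖u.1 m‖ ((2 : ℝ) ^ (-m) * ‖u.2 m‖)) := by
  rw [IsCompatible] at hu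
  rw [ellOneNorm, iInf_pos hu, add_zero]

theorem ellOneNorm_of_not_isCompatible (k : ℕ) {u : (ℤ → E₀) × (ℤ → E₁)}
    (hu : ¬ IsCompatible i₀ i₁ u) : ellOneNorm i₀ i₁ k u = ∞ := by
  rw [IsCompatible] at hu
  rw [ellOneNorm, iInf_neg hu, add_top]

theorem isCompatible_of_ellOneNorm_ne_top {k : ℕ} {u : (ℤ → E₀) × (ℤ → E₁)}
    (hu : ellOneNorm i₀ i₁ k u ≠ ∞) : IsCompatible i₀ i₁ u :=
  not_imp_comm.1 (ellOneNorm_of_not_isCompatible k) hu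

theorem ellOneNorm_cutOp_le_mul (φ : ℤ → Prop) [DecidablePred φ] {k l : ℕ} {c : ℝ} (hc : 0 < c)
    (weight_le : ∀ m, φ m → (2 : ℝ) ^ (-(k : ℤ) * m) ≤ c * (2 : ℝ) ^ (-(l : ℤ) * m))
    (u : (ℤ → E₀) × (ℤ → E₁)) :
    ellOneNorm i₀ i₁ k (cutOp φ u) ≤ ENNReal.ofReal c * ellOneNorm i₀ i₁ l u := by
  by_cases hu : IsCompatible i₀ i₁ u
  · rw [ellOneNorm_of_isCompatible k (hu.cutOp φ), ellOneNorm_of_isCompatible l hu,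
      ← ENNReal.tsum_mul_left]
    refine ENNReal.tsum_le_tsum fun m => ?_
    rw [← ENNReal.ofReal_mul hc.le, cutOp_fst_apply, cutOp_snd_apply, ← mul_assoc]
    apply ENNReal.ofReal_le_ofReal
    by_cases hm : φ m
    · rw [if_pos hm, if_pos hm]
      gcongr
      exact weight_le m hm
    · rw [if_neg hm, if_neg hm, norm_zero, norm_zero, mul_zero, max_self, mul_zero]
      positivity
  · rw [ellOneNorm_of_not_isCompatible l hu, ENNReal.mul_top (ENNReal.ofReal_pos.2 hc).ne']
    exact le_top

theorem ellOneNorm_cutOp_le (φ : ℤ → Prop) [DecidablePred φ] (k : ℕ)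
    (u : (ℤ → E₀) × (ℤ → E₁)) : ellOneNorm i₀ i₁ k (cutOp φ u) ≤ ellOneNorm i₀ i₁ k u := by
  simpa using ellOneNorm_cutOp_le_mul φ one_pos (fun m _ => (one_mul _).ge) u

theorem ellOneNorm_cutOp_lt_le {k l : ℕ} (hkl : k ≤ l) (n : ℤ) (u : (ℤ → E₀) × (ℤ → E₁)) :
    ellOneNorm i₀ i₁ l (cutOp (fun m => n < m) u) ≤
      ENNReal.ofReal ((2 : ℝ) ^ (((k : ℤ) - l) * n)) * ellOneNorm i₀ i₁ k u := by
  refine ellOneNorm_cutOp_le_mul _ (by positivity) (fun m hm => ?_) u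
  have exponent_le : -(l : ℤ) * m ≤ ((k : ℤ) - l) * n + -(k : ℤ) * m := by
    nlinarith [Int.ofNat_le.2 hkl]
  rw [← zpow_add₀ two_ne_zero]
  exact zpow_le_zpow_right₀ one_le_two exponent_le

theorem ellOneNorm_cutOp_lt_neg_le {k l : ℕ} (hkl : k ≤ l) (n : ℤ) (u : (ℤ → E₀) × (ℤ → E₁)) :
    ellOneNorm i₀ i₁ k (cutOp (fun m => m < -n) u) ≤
      ENNReal.ofReal ((2 : ℝ) ^ (((k : ℤ) - l) * n)) * ellOneNorm i₀ i₁ l u := by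
  refine ellOneNorm_cutOp_le_mul _ (by positivity) (fun m hm => ?_) u
  have exponent_le : -(k : ℤ) * m ≤ ((k : ℤ) - l) * n + -(l : ℤ) * m := by
    nlinarith [Int.ofNat_le.2 hkl]
  rw [← zpow_add₀ two_ne_zero]
  exact zpow_le_zpow_right₀ one_le_two exponent_le

theorem ellOneNorm_cutOp_ne_top {φ : ℤ → Prop} [DecidablePred φ] (hφ : {m | φ m}.Finite) (k : ℕ)
    {u : (ℤ → E₀) × (ℤ → E₁)} (hu : IsCompatible i₀ i₁ u) :
    ellOneNorm i₀ i₁ k (cutOp φ u) ≠ ∞ := by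
  rw [ellOneNorm_of_isCompatible k (hu.cutOp φ), tsum_eq_sum (s := hφ.toFinset)]
  · exact ENNReal.sum_ne_top.2 fun _ _ => ENNReal.ofReal_ne_top
  · intro m hm
    have not_kept : ¬ φ m := by simpa using hm
    simp [cutOp_fst_apply, cutOp_snd_apply, not_kept]

theorem ellOneNorm_cutOp_abs_le_ne_top (n : ℤ) (k : ℕ) {u : (ℤ → E₀) × (ℤ → E₁)}
    (hu : IsCompatible i₀ i₁ u) : ellOneNorm i₀ i₁ k (cutOp (fun m => |m| ≤ n) u) ≠ ∞ :=
  have finite_cut : {m : ℤ | |m| ≤ n}.Finite :=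
    (finite_Icc (-n) n).subset fun _ hm => abs_le.1 hm
  ellOneNorm_cutOp_ne_top finite_cut k hu

theorem ite_abs_le_add_ite_lt_add_ite_lt_neg {G M : Type*} [AddCommGroup G] [LinearOrder G]
    [IsOrderedAddMonoid G] [AddZeroClass M] {n : G} (hn : 0 ≤ n) (m : G) (a : M) :
    (if |m| ≤ n then a else 0) + (if n < m then a else 0) + (if m < -n then a else 0) = a := by
  grind [abs_le, add_zero, zero_add]

theorem cutOp_abs_le_add_cutOp_lt_add_cutOp_lt_neg {n : ℤ} (hn : 0 ≤ n)
    (u : (ℤ → E₀) × (ℤ → E₁)) :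
    cutOp (fun m => |m| ≤ n) u + cutOp (fun m => n < m) u + cutOp (fun m => m < -n) u = u :=
  Prod.ext (funext fun m => ite_abs_le_add_ite_lt_add_ite_lt_neg hn m (u.1 m))
    (funext fun m => ite_abs_le_add_ite_lt_add_ite_lt_neg hn m (u.2 m))

theorem tendsto_ofReal_two_zpow_mul_atTop {a : ℤ} (ha : a < 0) :
    Tendsto (fun n : ℕ => ENNReal.ofReal ((2 : ℝ) ^ (a * n))) atTop (nhds 0) := by
  have ratio_lt_one : (2 : ℝ) ^ a < 1 := zpow_lt_one_of_neg₀ one_lt_two ha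
  have powers : Tendsto (fun n : ℕ => ((2 : ℝ) ^ a) ^ n) atTop (nhds 0) :=
    tendsto_pow_atTop_nhds_zero_of_lt_one (by positivity) ratio_lt_one
  simpa [zpow_mul] using ENNReal.tendsto_ofReal powers

theorem satisfiesAP_ellOneNorm (i₀ : E₀ →ₗ[ℝ] W) (i₁ : E₁ →ₗ[ℝ] W) {k l : ℕ} (hkl : k < l) :
    SatisfiesAP (ellOneNorm i₀ i₁ k) (ellOneNorm i₀ i₁ l) := by
  have contraction (φ : ℤ → Prop) [DecidablePred φ] (j : ℕ) (u : (ℤ → E₀) × (ℤ → E₁)) :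
      ellOneNorm i₀ i₁ j (cutOp φ u) ≤ 1 * ellOneNorm i₀ i₁ j u :=
    (ellOneNorm_cutOp_le φ j u).trans_eq (one_mul _).symm
  refine ⟨fun n => cutOp fun m => |m| ≤ (n : ℤ), fun n => cutOp fun m => (n : ℤ) < m,
    fun n => cutOp fun m => m < -(n : ℤ), 1,
    fun n => ENNReal.ofReal ((2 : ℝ) ^ (((k : ℤ) - l) * n)), one_pos, ENNReal.one_ne_top,
    tendsto_ofReal_two_zpow_mul_atTop (by lia), fun n x y hx hy => ?_,
    fun _ => contraction _ k, fun _ => contraction _ l, fun _ => contraction _ k,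
    fun _ => contraction _ l, fun _ => contraction _ k, fun _ => contraction _ l,
    fun n x _ => ellOneNorm_cutOp_lt_le hkl.le n x,
    fun n x _ => ellOneNorm_cutOp_lt_neg_le hkl.le n x⟩
  have compatible : IsCompatible i₀ i₁ (x + y) :=
    (isCompatible_of_ellOneNorm_ne_top hx).add (isCompatible_of_ellOneNorm_ne_top hy)
  exact ⟨cutOp_abs_le_add_cutOp_lt_add_cutOp_lt_neg n.cast_nonneg _,
    ellOneNorm_cutOp_abs_le_ne_top n k compatible, ellOneNorm_cutOp_abs_le_ne_top n l compatible⟩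

theorem statement18_general (i₀ : E₀ →ₗ[ℝ] W) (i₁ : E₁ →ₗ[ℝ] W) {k l : ℕ} (hkl : k < l) :
    (∀ (n : ℕ) (u : (ℤ → E₀) × (ℤ → E₁)),
      cutOp (fun m => |m| ≤ (n : ℤ)) u + cutOp (fun m => (n : ℤ) < m) u +
        cutOp (fun m => m < -(n : ℤ)) u = u) ∧
    (∀ (n j : ℕ) (u : (ℤ → E₀) × (ℤ → E₁)),
      ellOneNorm i₀ i₁ j (cutOp (fun m => |m| ≤ (n : ℤ)) u) ≤ ellOneNorm i₀ i₁ j u ∧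
      ellOneNorm i₀ i₁ j (cutOp (fun m => (n : ℤ) < m) u) ≤ ellOneNorm i₀ i₁ j u ∧
      ellOneNorm i₀ i₁ j (cutOp (fun m => m < -(n : ℤ)) u) ≤ ellOneNorm i₀ i₁ j u) ∧
    (∀ (n : ℕ) (u : (ℤ → E₀) × (ℤ → E₁)),
      ellOneNorm i₀ i₁ k u ≠ ∞ ∨ ellOneNorm i₀ i₁ l u ≠ ∞ →
      ellOneNorm i₀ i₁ k (cutOp (fun m => |m| ≤ (n : ℤ)) u) ≠ ∞ ∧
      ellOneNorm i₀ i₁ l (cutOp (fun m => |m| ≤ (n : ℤ)) u) ≠ ∞) ∧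
    (∀ (n : ℕ) (u : (ℤ → E₀) × (ℤ → E₁)),
      ellOneNorm i₀ i₁ l (cutOp (fun m => (n : ℤ) < m) u) ≤
        ENNReal.ofReal ((2 : ℝ) ^ (((k : ℤ) - l) * n)) * ellOneNorm i₀ i₁ k u) ∧
    (∀ (n : ℕ) (u : (ℤ → E₀) × (ℤ → E₁)),
      ellOneNorm i₀ i₁ k (cutOp (fun m => m < -(n : ℤ)) u) ≤
        ENNReal.ofReal ((2 : ℝ) ^ (((k : ℤ) - l) * n)) * ellOneNorm i₀ i₁ l u) ∧
    SatisfiesAP (ellOneNorm i₀ i₁ k) (ellOneNorm i₀ i₁ l) := by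
  refine ⟨fun n => cutOp_abs_le_add_cutOp_lt_add_cutOp_lt_neg n.cast_nonneg,
    fun n j u =>
      ⟨ellOneNorm_cutOp_le _ j u, ellOneNorm_cutOp_le _ j u, ellOneNorm_cutOp_le _ j u⟩,
    fun n u hu => ?_, fun n => ellOneNorm_cutOp_lt_le hkl.le n,
    fun n => ellOneNorm_cutOp_lt_neg_le hkl.le n, satisfiesAP_ellOneNorm i₀ i₁ hkl⟩
  have compatible : IsCompatible i₀ i₁ u :=
    hu.elim isCompatible_of_ellOneNorm_ne_top isCompatible_of_ellOneNorm_ne_top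
  exact ⟨ellOneNorm_cutOp_abs_le_ne_top n k compatible,
    ellOneNorm_cutOp_abs_le_ne_top n l compatible⟩

end Cutting

/-- the cutting operators `P_n` (coordinates `|m| ≤ n`),
`P_n⁺` (coordinates `m ≥ n+1`), `P_n⁻` (coordinates `m ≤ -n-1`) satisfy
`I = P_n + P_n⁺ + P_n⁻`, all have norm at most `1` on `ℓ¹_k(Δ_m)`, `P_n` maps
`ℓ¹₀ + ℓ¹₁` into `ℓ¹₀ ∩ ℓ¹₁`, `‖P_n⁺‖_{L(ℓ¹₀,ℓ¹₁)} ≤ 2^{-n}`,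
`‖P_n⁻‖_{L(ℓ¹₁,ℓ¹₀)} ≤ 2^{-n}`; consequently `(ℓ¹₀(Δ_m), ℓ¹₁(Δ_m))` satisfies the
approximation hypothesis (AP). -/
theorem statement18 (i₀ : E₀ →ₗ[ℝ] V) (i₁ : E₁ →ₗ[ℝ] V) (hE : IsBanachCouple i₀ i₁) :
    (∀ (n : ℕ) (u : (ℤ → E₀) × (ℤ → E₁)),
      cutOp (fun m => |m| ≤ (n : ℤ)) u + cutOp (fun m => (n : ℤ) < m) u +
        cutOp (fun m => m < -(n : ℤ)) u = u) ∧
    (∀ (n : ℕ) (k : ℕ) (u : (ℤ → E₀) × (ℤ → E₁)), k ≤ 1 →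
      ellOneNorm i₀ i₁ k (cutOp (fun m => |m| ≤ (n : ℤ)) u) ≤ ellOneNorm i₀ i₁ k u ∧
      ellOneNorm i₀ i₁ k (cutOp (fun m => (n : ℤ) < m) u) ≤ ellOneNorm i₀ i₁ k u ∧
      ellOneNorm i₀ i₁ k (cutOp (fun m => m < -(n : ℤ)) u) ≤ ellOneNorm i₀ i₁ k u) ∧
    (∀ (n : ℕ) (u : (ℤ → E₀) × (ℤ → E₁)),
      ellOneNorm i₀ i₁ 0 u ≠ ∞ ∨ ellOneNorm i₀ i₁ 1 u ≠ ∞ →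
      ellOneNorm i₀ i₁ 0 (cutOp (fun m => |m| ≤ (n : ℤ)) u) ≠ ∞ ∧
      ellOneNorm i₀ i₁ 1 (cutOp (fun m => |m| ≤ (n : ℤ)) u) ≠ ∞) ∧
    (∀ (n : ℕ) (u : (ℤ → E₀) × (ℤ → E₁)),
      ellOneNorm i₀ i₁ 1 (cutOp (fun m => (n : ℤ) < m) u) ≤
        ENNReal.ofReal ((2 : ℝ) ^ (-(n : ℤ))) * ellOneNorm i₀ i₁ 0 u) ∧
    (∀ (n : ℕ) (u : (ℤ → E₀) × (ℤ → E₁)),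
      ellOneNorm i₀ i₁ 0 (cutOp (fun m => m < -(n : ℤ)) u) ≤
        ENNReal.ofReal ((2 : ℝ) ^ (-(n : ℤ))) * ellOneNorm i₀ i₁ 1 u) ∧
    SatisfiesAP (ellOneNorm i₀ i₁ 0) (ellOneNorm i₀ i₁ 1) := by
  obtain ⟨sum_eq, norm_le, ne_top, plus_le, minus_le, ap⟩ := statement18_general i₀ i₁ zero_lt_one
  exact ⟨sum_eq, fun n k u _ => norm_le n k u, ne_top, by simpa using plus_le,
    by simpa using minus_le, ap⟩

end
end
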